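/- arXiv:1507.00309 — 2 statements merged into one kernel-verified Lean document; each statement's English description precedes it below -/
import Mathlib

section
/- Let k be a subfield of the complex numbers, let G be a finite group, and let p be a prime. Suppose K is a minimal normal subgroup of G with G' ∩ K = 1, where G' is the derived subgroup of G. If acd_{k,p'}(G) ≤ 2, then acd_{k,p'}(G/K) ≤ acd_{k,p'}(G). -/
open scoped BigOperators

/-- The set of irreducible complex characters of `G`, viewed as functions `G → ℂ`. -/
def Irr (G : Type) [Monoid G] : Set (G → ℂ) :=
  {f | ∃ V : FDRep ℂ G, CategoryTheory.Simple V ∧ f = V.character}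

/-- The degree of a character, i.e. its value at the identity (a natural number). -/
noncomputable def charDeg {G : Type} [One G] (f : G → ℂ) : ℕ := ⌊(f 1).re⌋₊

/-- The average of the degrees of the characters in a set `S` of characters. -/
noncomputable def acd {G : Type} [One G] (S : Set (G → ℂ)) : ℝ :=
  (∑ᶠ f ∈ S, (f 1).re) / (S.ncard : ℝ)

/-- `G` has a normal `p`-complement: a normal subgroup of order coprime to `p`
whose index is a power of `p`. -/
def HasNormalPComplement (p : ℕ) (G : Type) [Group G] : Prop :=
  ∃ N : Subgroup G, N.Normal ∧ Nat.Coprime (Nat.card N) p ∧ ∃ n : ℕ, N.index = p ^ n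


lemma irr_norm {G : Type} [Group G] [Fintype G] (V : FDRep ℂ G) :
    CategoryTheory.Simple V ↔
      ∑ g : G, V.character g * V.character g⁻¹ = (Fintype.card G : ℂ) := by
  rw [FDRep.simple_iff_char_is_norm_one]
  simp

/-- The one-dimensional representation attached to a linear character. -/
noncomputable def linRep {G : Type} [Group G] (l : G →* ℂˣ) : FDRep ℂ G :=
  FDRep.of (V := ℂ) (((Algebra.lmul ℂ ℂ).toMonoidHom).comp ((Units.coeHom ℂ).comp l))

lemma linRep_char {G : Type} [Group G] (l : G →* ℂˣ) (g : G) :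
    (linRep l).character g = l g := by
  have : (linRep l).character g = LinearMap.trace ℂ ℂ (LinearMap.mulLeft ℂ (l g : ℂ)) := rfl
  have h2 : LinearMap.mulLeft ℂ (l g : ℂ) = (l g : ℂ) • (LinearMap.id : ℂ →ₗ[ℂ] ℂ) := by
    ext
    simp
  rw [this, h2, map_smul, LinearMap.trace_id]
  simp

lemma lin_mem_irr {G : Type} [Group G] [Fintype G] (l : G →* ℂˣ) :
    (fun g => (l g : ℂ)) ∈ Irr G := by
  refine ⟨linRep l, ?_, ?_⟩
  · rw [irr_norm]
    simp [linRep_char]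
  · funext g
    rw [linRep_char]

lemma twist_mem_irr {G : Type} [Group G] [Fintype G] (l : G →* ℂˣ) {f : G → ℂ}
    (hf : f ∈ Irr G) : (fun g => (l g : ℂ) * f g) ∈ Irr G := by
  obtain ⟨V, hV, rfl⟩ := hf
  have key : (CategoryTheory.MonoidalCategoryStruct.tensorObj (linRep l) V).character =
      fun g => (l g : ℂ) * V.character g := by
    rw [FDRep.char_tensor]
    funext g
    simp [linRep_char]
  refine ⟨CategoryTheory.MonoidalCategoryStruct.tensorObj (linRep l) V, ?_, key.symm⟩
  rw [irr_norm] at hV ⊢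
  rw [key, ← hV]
  refine Finset.sum_congr rfl fun g _ => ?_
  simp only [map_inv, Units.val_inv_eq_inv_val]
  field_simp

lemma infl_mem_irr {G : Type} [Group G] [Fintype G] (K : Subgroup G) [K.Normal]
    {f : G ⧸ K → ℂ} (hf : f ∈ Irr (G ⧸ K)) : (fun g : G => f (g : G ⧸ K)) ∈ Irr G := by
  classical
  obtain ⟨V, hV, rfl⟩ := hf
  refine ⟨FDRep.of (V.ρ.comp (QuotientGroup.mk' K)), ?_, rfl⟩
  rw [irr_norm] at hV ⊢
  have h1 : ∀ g : G, (FDRep.of (V.ρ.comp (QuotientGroup.mk' K))).character g =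
      V.character (g : G ⧸ K) := fun g => rfl
  simp only [h1, QuotientGroup.mk_inv]
  rw [← (Subgroup.groupEquivQuotientProdSubgroup (s := K)).symm.sum_comp]
  rw [Fintype.sum_prod_type]
  have h2 : ∀ (x : G ⧸ K) (y : K),
      (((Subgroup.groupEquivQuotientProdSubgroup (s := K)).symm (x, y) : G) : G ⧸ K) = x := by
    intro x y
    have := (Subgroup.groupEquivQuotientProdSubgroup (s := K)).apply_symm_apply (x, y)
    have h3 : ∀ g : G, ((Subgroup.groupEquivQuotientProdSubgroup (s := K)) g).1 = (g : G ⧸ K) :=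
      fun g => rfl
    rw [← h3, this]
  simp only [h2, Finset.sum_const, Finset.card_univ, nsmul_eq_mul]
  rw [← Finset.mul_sum, hV, Fintype.card_congr (Subgroup.groupEquivQuotientProdSubgroup (s := K)),
    Fintype.card_prod]
  push_cast
  ring

lemma irr_finite (G : Type) [Group G] [Fintype G] : (Irr G).Finite := by
  classical
  let B : LinearMap.BilinForm ℂ (G → ℂ) :=
    LinearMap.mk₂ ℂ (fun f f' => ∑ g, f g * f' g⁻¹)
      (by intros; simp [add_mul, Finset.sum_add_distrib])
      (by intros; simp [Finset.mul_sum, mul_assoc])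
      (by intros; simp [mul_add, Finset.sum_add_distrib])
      (by intros; simp [Finset.mul_sum, mul_left_comm])
  have hB : ∀ f f', B f f' = ∑ g, f g * f' g⁻¹ := fun _ _ => rfl
  have hli : LinearIndependent ℂ (fun f : Irr G => (f : G → ℂ)) := by
    refine LinearMap.BilinForm.linearIndependent_of_iIsOrtho (B := B) ?_ ?_
    · rintro ⟨f, V, hV, rfl⟩ ⟨f', W, hW, rfl⟩ hne
      change B _ _ = 0
      rw [hB]
      have : Invertible (Nat.card G : ℂ) := invertibleOfNonzero (by simp)
      have h := FDRep.char_orthonormal V W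
      rw [if_neg] at h
      · simpa using h
      · rintro ⟨i⟩
        exact hne (Subtype.ext (FDRep.char_iso i))
    · rintro ⟨f, V, hV, rfl⟩
      change ¬ (B _ _ = 0)
      rw [hB]
      simp only
      rw [(irr_norm V).1 hV]
      simp
  exact hli.setFinite

lemma irr_deg {G : Type} [Group G] [Fintype G] {f : G → ℂ} (hf : f ∈ Irr G) :
    ∃ n : ℕ, 0 < n ∧ f 1 = n := by
  obtain ⟨V, hV, rfl⟩ := hf
  refine ⟨_, ?_, FDRep.char_one V⟩
  rw [Nat.pos_iff_ne_zero]
  intro h0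
  have : Subsingleton V := Module.finrank_zero_iff.1 h0
  have h1 := (irr_norm V).1 hV
  have h2 : ∀ g, V.character g = 0 := by
    intro g
    have : V.ρ g = 0 := Subsingleton.elim _ _
    simp [FDRep.character, this]
  simp only [h2, mul_zero, Finset.sum_const_zero] at h1
  exact Fintype.card_ne_zero (α := G) (by exact_mod_cast h1.symm)

lemma irr_lin {G : Type} [Group G] {f : G → ℂ} (hf : f ∈ Irr G) (h1 : f 1 = 1) :
    ∃ l : G →* ℂˣ, f = fun g => (l g : ℂ) := by
  obtain ⟨V, hV, rfl⟩ := hf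
  have hd : Module.finrank ℂ V = 1 := by
    rw [FDRep.char_one] at h1
    exact_mod_cast h1
  have hs : ∀ g, V.ρ g = V.character g • LinearMap.id := by
    intro g
    obtain ⟨c, hc, -⟩ := LinearMap.existsUnique_eq_smul_id_of_finrank_eq_one hd (V.ρ g)
    have : V.character g = c := by
      simp [FDRep.character, hc, hd]
    rw [this]; exact hc
  have hm : ∀ g h, V.character (g * h) = V.character g * V.character h := by
    intro g h
    have : V.character (g * h) = LinearMap.trace ℂ V (V.ρ g * V.ρ h) := by
      rw [← map_mul]; rfl
    have h3 : V.ρ g * V.ρ h = (V.character g * V.character h) • LinearMap.id := by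
      rw [hs g, hs h]
      ext v
      simp only [LinearMap.smul_apply, LinearMap.id_apply, Module.End.mul_apply, mul_smul]
    rw [this, h3, map_smul, LinearMap.trace_id, hd]
    simp
  refine ⟨MonoidHom.toHomUnits ⟨⟨V.character, h1⟩, hm⟩, ?_⟩
  funext g
  simp

lemma acd_arith {S N S' N' m : ℝ} (hN : 0 < N) (hm : 0 < m) (hN' : 0 ≤ N') (hS' : 2 * N' ≤ S')
    (h : (m * S + S') / (m * N + N') ≤ 2) : S / N ≤ (m * S + S') / (m * N + N') := by
  have hpos : 0 < m * N + N' := by positivity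
  rw [div_le_iff₀ hpos] at h
  rw [div_le_div_iff₀ hN hpos]
  have h3 : m * S ≤ m * (2 * N) := by linarith
  have h4 : S ≤ 2 * N := le_of_mul_le_mul_left h3 hm
  nlinarith

theorem acd_quotient_le_of_minimal_central
    (k : Subfield ℂ) (G : Type) [Group G] [Fintype G] (p : ℕ) (hp : p.Prime)
    (K : Subgroup G) [K.Normal] (hK : K ≠ ⊥)
    (hmin : ∀ L : Subgroup G, L.Normal → L ≤ K → L = ⊥ ∨ L = K)
    (hcap : commutator G ⊓ K = ⊥)
    (h2 : acd {f ∈ Irr G | (∀ g, f g ∈ k) ∧ ¬ p ∣ charDeg f} ≤ 2) :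
    acd {f ∈ Irr (G ⧸ K) | (∀ g, f g ∈ k) ∧ ¬ p ∣ charDeg f} ≤
      acd {f ∈ Irr G | (∀ g, f g ∈ k) ∧ ¬ p ∣ charDeg f} := by
  classical
  set SG : Set (G → ℂ) := {f ∈ Irr G | (∀ g, f g ∈ k) ∧ ¬ p ∣ charDeg f} with hSG
  set SQ : Set (G ⧸ K → ℂ) := {f ∈ Irr (G ⧸ K) | (∀ g, f g ∈ k) ∧ ¬ p ∣ charDeg f} with hSQ
  have : Fintype (G ⧸ K) := Fintype.ofFinite _
  have finG : SG.Finite := (irr_finite G).subset fun f hf => hf.1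
  have finQ : SQ.Finite := (irr_finite (G ⧸ K)).subset fun f hf => hf.1
  have hdeg1 : ∀ {H : Type} [Group H] (f : H → ℂ), f 1 = 1 → ¬ p ∣ charDeg f := by
    intro H _ f hf
    simp [charDeg, hf, hp.one_lt.ne']
  have oneQ : (fun _ => (1 : ℂ)) ∈ SQ :=
    ⟨by simpa using lin_mem_irr (1 : G ⧸ K →* ℂˣ), fun _ => k.one_mem, hdeg1 _ rfl⟩
  -- restrictions to K of k-valued linear characters of G
  let L : Set (G →* ℂˣ) := {l | ∀ g, (l g : ℂ) ∈ k}
  have hLS : ∀ l ∈ L, (fun g => (l g : ℂ)) ∈ SG := fun l hl =>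
    ⟨lin_mem_irr l, hl, hdeg1 _ (by simp)⟩
  have finL : L.Finite := by
    refine Set.Finite.of_finite_image (f := fun l g => (l g : ℂ)) (finG.subset ?_) ?_
    · rintro _ ⟨l, hl, rfl⟩
      exact hLS l hl
    · intro l _ l' _ h
      ext g
      exact congrFun h g
  let r : (G →* ℂˣ) → (K →* ℂˣ) := fun l => l.comp K.subtype
  have finA : (r '' L).Finite := finL.image r
  have hch : ∀ a : K →* ℂˣ, ∃ l : G →* ℂˣ, a ∈ r '' L → l ∈ L ∧ r l = a := by
    intro a
    by_cases ha : a ∈ r '' L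
    · obtain ⟨l, hl, h⟩ := ha
      exact ⟨l, fun _ => ⟨hl, h⟩⟩
    · exact ⟨1, fun h => absurd h ha⟩
  choose s hs using hch
  let Φ : (K →* ℂˣ) × (G ⧸ K → ℂ) → (G → ℂ) := fun x g => (s x.1 g : ℂ) * x.2 (g : G ⧸ K)
  let D : Finset ((K →* ℂˣ) × (G ⧸ K → ℂ)) := finA.toFinset ×ˢ finQ.toFinset
  have hΦ1 : ∀ x, Φ x 1 = x.2 1 := by intro x; simp [Φ]
  have hinj : Set.InjOn Φ D := by
    rintro ⟨a, f⟩ hx ⟨b, f'⟩ hy hxy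
    simp only [D, Finset.coe_product, Set.Finite.coe_toFinset, Set.mem_prod] at hx hy
    have e1 : f 1 = f' 1 := by
      have := congrFun hxy 1
      rwa [hΦ1, hΦ1] at this
    have hf0 : f 1 ≠ 0 := by
      obtain ⟨n, hn, h⟩ := irr_deg hx.2.1
      rw [h]; exact_mod_cast hn.ne'
    have hab : a = b := by
      ext c
      have h := congrFun hxy (c : G)
      have hc : ((c : G) : G ⧸ K) = 1 := (QuotientGroup.eq_one_iff _).2 c.2
      simp only [Φ, hc, ← e1] at h
      have h' := mul_right_cancel₀ hf0 h
      rw [← (hs a hx.1).2, ← (hs b hy.1).2]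
      exact h'
    subst hab
    refine Prod.ext rfl ?_
    funext q
    obtain ⟨g, rfl⟩ := QuotientGroup.mk_surjective q
    exact mul_left_cancel₀ (Units.ne_zero _) (congrFun hxy g)
  have hsub : D.image Φ ⊆ finG.toFinset := by
    intro f hf
    obtain ⟨⟨a, ψ⟩, hx, rfl⟩ := Finset.mem_image.1 hf
    simp only [D, Finset.mem_product, Set.Finite.mem_toFinset] at hx ⊢
    refine ⟨twist_mem_irr (s a) (infl_mem_irr K hx.2.1),
      fun g => k.mul_mem ((hs a hx.1).1 g) (hx.2.2.1 _), ?_⟩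
    have : charDeg (Φ (a, ψ)) = charDeg ψ := by
      unfold charDeg
      rw [hΦ1]
    rw [this]
    exact hx.2.2.2
  have hrest : ∀ f ∈ finG.toFinset \ D.image Φ, (2 : ℝ) ≤ (f 1).re := by
    intro f hf
    rw [Finset.mem_sdiff, Set.Finite.mem_toFinset] at hf
    obtain ⟨hf, hnot⟩ := hf
    obtain ⟨n, hn, hfn⟩ := irr_deg hf.1
    rw [hfn]
    by_contra hlt
    have hn1 : n = 1 := by
      have : n < 2 := by
        rw [not_le] at hlt
        exact_mod_cast hlt
      omega
    subst hn1
    obtain ⟨l, rfl⟩ := irr_lin hf.1 (by simpa using hfn)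
    apply hnot
    have hl : l ∈ L := hf.2.1
    have hrl : r l ∈ r '' L := ⟨l, hl, rfl⟩
    obtain ⟨hs1, hs2⟩ := hs (r l) hrl
    let μ : G →* ℂˣ := (s (r l))⁻¹ * l
    have hμ : ∀ c ∈ K, μ c = 1 := by
      intro c hc
      have := DFunLike.congr_fun hs2 ⟨c, hc⟩
      have h' : s (r l) c = l c := this
      simp [μ, h']
    let ν : G ⧸ K →* ℂˣ := QuotientGroup.lift K μ hμ
    have hν : ∀ g : G, ν (g : G ⧸ K) = μ g := fun g => rfl
    refine Finset.mem_image.2 ⟨(r l, fun q => (ν q : ℂ)), ?_, ?_⟩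
    · simp only [D, Finset.mem_product, Set.Finite.mem_toFinset]
      refine ⟨hrl, lin_mem_irr ν, ?_, hdeg1 _ (by simp)⟩
      intro q
      obtain ⟨g, rfl⟩ := QuotientGroup.mk_surjective q
      simp only [hν, μ, MonoidHom.mul_apply, MonoidHom.inv_apply, Units.val_mul,
        Units.val_inv_eq_inv_val]
      exact k.mul_mem (k.inv_mem (hs1 g)) (hl g)
    · funext g
      simp [Φ, hν, μ]
  have hsumD : ∑ x ∈ D, (Φ x 1).re = (finA.toFinset.card : ℝ) * ∑ f ∈ finQ.toFinset, (f 1).re := by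
    simp only [hΦ1, D, Finset.sum_product, Finset.sum_const, nsmul_eq_mul]
  have hsumG : ∑ f ∈ finG.toFinset, (f 1).re =
      (finA.toFinset.card : ℝ) * ∑ f ∈ finQ.toFinset, (f 1).re +
        ∑ f ∈ finG.toFinset \ D.image Φ, (f 1).re := by
    rw [← Finset.sum_sdiff hsub, Finset.sum_image hinj, hsumD, add_comm]
  have hcardG : (finG.toFinset.card : ℝ) =
      (finA.toFinset.card : ℝ) * (finQ.toFinset.card : ℝ) +
        ((finG.toFinset \ D.image Φ).card : ℝ) := by
    rw [← Finset.card_sdiff_add_card_eq_card hsub, Finset.card_image_of_injOn hinj,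
      Finset.card_product]
    push_cast
    ring
  have hA : acd SG = ((finA.toFinset.card : ℝ) * ∑ f ∈ finQ.toFinset, (f 1).re +
        ∑ f ∈ finG.toFinset \ D.image Φ, (f 1).re) /
      ((finA.toFinset.card : ℝ) * (finQ.toFinset.card : ℝ) +
        ((finG.toFinset \ D.image Φ).card : ℝ)) := by
    rw [← hsumG, ← hcardG, acd, finsum_mem_eq_finite_toFinset_sum _ finG,
      Set.ncard_eq_toFinset_card _ finG]
  have hQ : acd SQ = (∑ f ∈ finQ.toFinset, (f 1).re) / (finQ.toFinset.card : ℝ) := by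
    rw [acd, finsum_mem_eq_finite_toFinset_sum _ finQ, Set.ncard_eq_toFinset_card _ finQ]
  rw [hA] at h2 ⊢
  rw [hQ]
  refine acd_arith ?_ ?_ (by positivity) ?_ h2
  · have : 0 < finQ.toFinset.card := Finset.card_pos.2 ⟨_, (Set.Finite.mem_toFinset _).2 oneQ⟩
    exact_mod_cast this
  · have : 0 < finA.toFinset.card := Finset.card_pos.2
      ⟨r 1, (Set.Finite.mem_toFinset _).2 ⟨1, fun g => by simpa using k.one_mem, rfl⟩⟩
    exact_mod_cast this
  · have := Finset.card_nsmul_le_sum _ _ _ hrest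
    rw [nsmul_eq_mul] at this
    linarith
end

section
/- Let p be a prime and let H be a nontrivial abelian finite group acting faithfully on a faithful irreducible module V of order p^a over the field of p elements, and let k be a subfield of the complex numbers containing the primitive pth roots of unity. Set G = V ⋊ H. Then acd_k(G) ≥ 2, except in the following cases: (1) if |H| = 2, then acd_k(G) = 2(p^a + 1)/(p^a + 3); (2) if |H| = 3, A^k(H) = 1, and p^a < 10, then acd_k(G) = 3(p^a + 2)/(p^a + 8); (3) if |H| = p^a − 1 and A^k(H) = 1, then acd_k(G) = 2(p^a − 1)/p^a. -/
open scoped BigOperators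

lemma card_dual (V : Type) [CommGroup V] [Fintype V] :
    Nat.card (AddChar (Additive V) ℂ) = Nat.card V := by
  rw [Nat.card_eq_fintype_card, AddChar.card_eq, ← Nat.card_eq_fintype_card]
  exact Nat.card_congr Additive.toMul

open CategoryTheory in
lemma irr_conj {G : Type} [Group G] {f : G → ℂ} (hf : f ∈ Irr G) (g h : G) :
    f (h * g * h⁻¹) = f g := by
  obtain ⟨W, -, rfl⟩ := hf
  exact FDRep.char_conj W g h

lemma irr_orth {G : Type} [Group G] [Fintype G] {f f' : G → ℂ} (hf : f ∈ Irr G)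
    (hf' : f' ∈ Irr G) (hne : f ≠ f') : ∑ g, f g * f' g⁻¹ = 0 := by
  obtain ⟨W, hW, rfl⟩ := hf
  obtain ⟨W', hW', rfl⟩ := hf'
  have hc : (Nat.card G : ℂ) ≠ 0 := by exact_mod_cast Nat.card_pos.ne'
  have : Invertible (Nat.card G : ℂ) := invertibleOfNonzero hc
  have h := FDRep.char_orthonormal W W'
  rw [if_neg] at h
  · simpa [hc] using h
  · rintro ⟨i⟩
    exact hne (FDRep.char_iso i)

lemma irr_ne_zero {G : Type} [Group G] [Fintype G] {f : G → ℂ} (hf : f ∈ Irr G) :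
    ¬ ∀ g, f g = 0 := by
  obtain ⟨W, hW, rfl⟩ := hf
  have hc : (Nat.card G : ℂ) ≠ 0 := by exact_mod_cast Nat.card_pos.ne'
  intro h0
  have h := (FDRep.simple_iff_char_is_norm_one W).1 hW
  simp only [h0] at h
  simp at h
  exact hc (by simpa using h.symm)

lemma lin_irr {G : Type} [Group G] [Fintype G] (χ : G →* ℂ) : (fun g => χ g) ∈ Irr G := by
  let ρ : Representation ℂ G ℂ :=
    { toFun := fun g => χ g • LinearMap.id
      map_one' := by ext; simp
      map_mul' := fun g h => by ext; simp [mul_comm] }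
  have hch : (FDRep.of ρ).character = fun g => χ g := by
    funext g
    change LinearMap.trace ℂ ℂ (ρ g) = _
    change LinearMap.trace ℂ ℂ (χ g • LinearMap.id) = _
    rw [map_smul, LinearMap.trace_id]
    simp
  refine ⟨FDRep.of ρ, ?_, hch.symm⟩
  rw [FDRep.simple_iff_char_is_norm_one, hch]
  simp only [← map_mul, mul_inv_cancel, map_one]
  simp

lemma fourier_const {V : Type} [CommGroup V] [Fintype V] (F : V → ℂ)
    (hF : ∀ ψ : AddChar (Additive V) ℂ, ψ ≠ 0 → ∑ v, F v * ψ (.ofMul v⁻¹) = 0) (v : V) :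
    (Fintype.card V : ℂ) * F v = ∑ w, F w := by
  classical
  have h1 : ∑ ψ : AddChar (Additive V) ℂ, ∑ w, F w * ψ (.ofMul w⁻¹) * ψ (.ofMul v)
      = ∑ w, F w := by
    rw [Finset.sum_eq_single 0]
    · simp
    · intro ψ _ hψ
      rw [← Finset.sum_mul, hF ψ hψ, zero_mul]
    · simp
  rw [← h1, Finset.sum_comm]
  have h2 : ∀ w, ∑ ψ : AddChar (Additive V) ℂ, F w * ψ (.ofMul w⁻¹) * ψ (.ofMul v)
      = F w * if w = v then (Fintype.card V : ℂ) else 0 := by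
    intro w
    have := AddChar.sum_apply_eq_ite (α := Additive V) (.ofMul (w⁻¹ * v))
    have e : (Additive.ofMul (w⁻¹ * v) = 0) ↔ w = v := by
      rw [ofMul_eq_zero, inv_mul_eq_one]
    simp only [e] at this
    rw [Fintype.card_congr (Additive.ofMul : V ≃ Additive V), ← this, Finset.mul_sum]
    refine Finset.sum_congr rfl fun ψ _ => ?_
    rw [ofMul_mul, AddChar.map_add_eq_mul, mul_assoc]
  simp only [h2]
  simp [mul_comm]

lemma fourier_eqzero {V : Type} [CommGroup V] [Fintype V] (F : V → ℂ)
    (hF : ∀ ψ : AddChar (Additive V) ℂ, ∑ v, F v * ψ (.ofMul v⁻¹) = 0) (v : V) :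
    F v = 0 := by
  have h1 := fourier_const F (fun ψ _ => hF ψ) v
  have h2 := hF 0
  simp only [AddChar.zero_apply, mul_one] at h2
  rw [h2] at h1
  have : (Fintype.card V : ℂ) ≠ 0 := by exact_mod_cast Fintype.card_ne_zero
  simpa [this] using h1

/-- the multiplicative homomorphism attached to an additive character of `Additive H` -/
def chHom {H : Type} [CommGroup H] (ψ : AddChar (Additive H) ℂ) : H →* ℂ where
  toFun h := ψ (.ofMul h)
  map_one' := by simp
  map_mul' a b := by rw [ofMul_mul, AddChar.map_add_eq_mul]

lemma irr_comm {H : Type} [CommGroup H] [Fintype H] (f : H → ℂ) :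
    f ∈ Irr H ↔ ∃ ψ : AddChar (Additive H) ℂ, f = fun h => ψ (.ofMul h) := by
  constructor
  · intro hf
    by_contra hne
    push Not at hne
    refine irr_ne_zero hf (fourier_eqzero f fun ψ => ?_)
    exact irr_orth hf (lin_irr (chHom ψ)) (hne ψ)
  · rintro ⟨ψ, rfl⟩
    exact lin_irr (chHom ψ)

/-- the set of k-valued linear characters -/
def kDual (H : Type) [CommGroup H] (k : Subfield ℂ) : Subgroup (AddChar (Additive H) ℂ) where
  carrier := {ψ | ∀ h, ψ h ∈ k}
  one_mem' := by intro h; simp [k.one_mem]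
  mul_mem' := by
    intro a b ha hb h
    rw [AddChar.mul_apply]
    exact k.mul_mem (ha h) (hb h)
  inv_mem' := by
    intro a ha h
    rw [AddChar.inv_apply]
    exact ha _

lemma kDual_dvd (H : Type) [CommGroup H] [Fintype H] (k : Subfield ℂ) :
    Nat.card (kDual H k) ∣ Nat.card H := by
  have h := Subgroup.card_subgroup_dvd_card (kDual H k)
  rwa [card_dual] at h

lemma kDual_card_iff (H : Type) [CommGroup H] [Fintype H] (k : Subfield ℂ) :
    {h : H | ∀ χ : H → ℂ, χ ∈ Irr H → χ 1 = 1 → (∀ x, χ x ∈ k) → χ h = 1} = {1} ↔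
    Nat.card (kDual H k) = Nat.card H := by
  classical
  have hset : {h : H | ∀ χ : H → ℂ, χ ∈ Irr H → χ 1 = 1 → (∀ x, χ x ∈ k) → χ h = 1} =
      {h : H | ∀ ψ ∈ kDual H k, ψ (.ofMul h) = 1} := by
    ext h
    simp only [Set.mem_ofPred_eq, irr_comm]
    constructor
    · intro hh ψ hψ
      exact hh _ ⟨ψ, rfl⟩ (AddChar.map_zero_eq_one ψ) (fun x => hψ _)
    · rintro hh _ ⟨ψ, rfl⟩ - hk
      exact hh ψ (fun x => hk x.toMul)
  rw [hset]
  constructor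
  · intro hA
    refine le_antisymm (Nat.le_of_dvd Nat.card_pos (kDual_dvd H k)) ?_
    have : Fintype (kDual H k) := Fintype.ofFinite _
    let E : H → AddChar (Additive (kDual H k)) ℂ := fun h =>
      { toFun := fun ψ => ψ.toMul.1 (.ofMul h)
        map_zero_eq_one' := by simp
        map_add_eq_mul' := by intro a b; simp [AddChar.mul_apply] }
    have hE : Function.Injective E := by
      intro a b hab
      have : a * b⁻¹ ∈ ({1} : Set H) := by
        rw [← hA]
        intro ψ hψ
        have h := DFunLike.congr_fun hab (Additive.ofMul ⟨ψ, hψ⟩)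
        change ψ (.ofMul a) = ψ (.ofMul b) at h
        rw [ofMul_mul, AddChar.map_add_eq_mul, h, ← AddChar.map_add_eq_mul, ← ofMul_mul]
        simp
      exact mul_inv_eq_one.1 this
    have := Fintype.card_le_of_injective E hE
    rw [AddChar.card_eq] at this
    rw [Nat.card_eq_fintype_card, Nat.card_eq_fintype_card,
      Fintype.card_congr (Additive.ofMul : kDual H k ≃ Additive (kDual H k))]
    exact this
  · intro hc
    have htop : kDual H k = ⊤ := by
      apply Subgroup.eq_top_of_card_eq
      rw [hc, card_dual]
    ext h
    simp only [htop, Subgroup.mem_top, Set.mem_ofPred_eq, Set.mem_singleton_iff, true_implies]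
    constructor
    · intro hh
      have := AddChar.sum_apply_eq_ite (α := Additive H) (.ofMul h)
      simp only [hh] at this
      by_contra hne
      rw [if_neg (by simpa using hne)] at this
      simp at this
    · rintro rfl; simp

/-- twist of a character of `V` by an element of `H` -/
def twist {H V : Type} [CommGroup H] [CommGroup V] (φ : H →* MulAut V) (x : H)
    (l : AddChar (Additive V) ℂ) : AddChar (Additive V) ℂ where
  toFun v := l (.ofMul (φ x v.toMul))
  map_zero_eq_one' := by simp
  map_add_eq_mul' a b := by rw [toMul_add, map_mul, ofMul_mul, AddChar.map_add_eq_mul]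

lemma twist_apply {H V : Type} [CommGroup H] [CommGroup V] (φ : H →* MulAut V) (x : H)
    (l : AddChar (Additive V) ℂ) (v : V) : twist φ x l (.ofMul v) = l (.ofMul (φ x v)) := rfl

lemma free_surj {H V : Type} [CommGroup H] [CommGroup V] [Fintype V] (φ : H →* MulAut V)
    (hfree : ∀ h, h ≠ 1 → ∀ v, φ h v = v → v = 1) (h : H) (hh : h ≠ 1) (v : V) :
    ∃ w, w⁻¹ * φ h w = v := by
  have hinj : Function.Injective (fun w : V => w⁻¹ * φ h w) := by
    intro a b hab
    have hab' : a⁻¹ * φ h a = b⁻¹ * φ h b := hab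
    refine mul_inv_eq_one.1 (hfree h hh _ ?_)
    rw [map_mul, map_inv]
    have h1 : φ h a = a * (b⁻¹ * φ h b) := by rw [← hab']; simp
    rw [h1]
    simp [mul_assoc]
  exact Finite.surjective_of_injective hinj v

lemma twist_inj {H V : Type} [CommGroup H] [CommGroup V] [Fintype V] (φ : H →* MulAut V)
    (hfree : ∀ h, h ≠ 1 → ∀ v, φ h v = v → v = 1) (l : AddChar (Additive V) ℂ) (hl : l ≠ 0)
    (x y : H) (hxy : twist φ x l = twist φ y l) : x = y := by
  by_contra hne
  apply hl
  have hne' : x * y⁻¹ ≠ 1 := fun h => hne (mul_inv_eq_one.1 h)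
  ext v
  obtain ⟨w, hw⟩ := free_surj φ hfree _ hne' v.toMul
  have h1 := DFunLike.congr_fun hxy (.ofMul (φ y⁻¹ w))
  rw [twist_apply, twist_apply, ← MulAut.mul_apply, ← map_mul, ← MulAut.mul_apply, ← map_mul,
    mul_inv_cancel, map_one, MulAut.one_apply] at h1
  have h2 : v = .ofMul (w⁻¹ * φ (x * y⁻¹) w) := by rw [hw]; rfl
  rw [h2, ofMul_mul, AddChar.map_add_eq_mul, h1, ← AddChar.map_add_eq_mul, ← ofMul_mul]
  simp

lemma twist_ne_zero {H V : Type} [CommGroup H] [CommGroup V] (φ : H →* MulAut V)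
    (l : AddChar (Additive V) ℂ) (hl : l ≠ 0) (x : H) : twist φ x l ≠ 0 := by
  intro h
  apply hl
  ext v
  have := DFunLike.congr_fun h (.ofMul (φ x⁻¹ v.toMul))
  rw [twist_apply, ← MulAut.mul_apply, ← map_mul, mul_inv_cancel] at this
  simpa using this

lemma twist_twist {H V : Type} [CommGroup H] [CommGroup V] (φ : H →* MulAut V)
    (l : AddChar (Additive V) ℂ) (x y : H) : twist φ x (twist φ y l) = twist φ (y * x) l := by
  ext v
  change l _ = l _
  rw [map_mul]; rfl

lemma twist_one {H V : Type} [CommGroup H] [CommGroup V] (φ : H →* MulAut V)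
    (l : AddChar (Additive V) ℂ) : twist φ 1 l = l := by
  ext v
  change l _ = l _
  rw [map_one]; rfl

open scoped Classical in
lemma dual_orth {V : Type} [CommGroup V] [Fintype V] (l m : AddChar (Additive V) ℂ) :
    ∑ v : V, l (.ofMul v) * m (.ofMul v⁻¹) = if l = m then (Fintype.card V : ℂ) else 0 := by
  have := AddChar.sum_eq_ite (l - m)
  simp only [sub_eq_zero] at this
  rw [Fintype.card_congr (Additive.ofMul : V ≃ Additive V), ← this,
    ← Equiv.sum_comp (Additive.ofMul : V ≃ Additive V)]
  refine Finset.sum_congr rfl fun v _ => ?_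
  rw [AddChar.sub_apply]
  rfl

open scoped Classical in
/-- the induced character -/
noncomputable def indCh {H V : Type} [CommGroup H] [Fintype H] [CommGroup V]
    (φ : H →* MulAut V) (l : AddChar (Additive V) ℂ) : V ⋊[φ] H → ℂ :=
  fun g => if g.right = 1 then ∑ x, twist φ x l (.ofMul g.left) else 0

lemma sum_semi {H V : Type} [CommGroup H] [Fintype H] [CommGroup V] [Fintype V]
    (φ : H →* MulAut V) [Fintype (V ⋊[φ] H)] (F : V ⋊[φ] H → ℂ) :
    ∑ g, F g = ∑ h : H, ∑ v : V, F ⟨v, h⟩ := by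
  rw [← Equiv.sum_comp (SemidirectProduct.equivProd (φ := φ)).symm, Fintype.sum_prod_type,
    Finset.sum_comm]
  rfl

lemma ind_inner {H V : Type} [CommGroup H] [Fintype H] [CommGroup V] [Fintype V]
    (φ : H →* MulAut V) [Fintype (V ⋊[φ] H)] (F : V ⋊[φ] H → ℂ)
    (l : AddChar (Additive V) ℂ) :
    ∑ g, F g * indCh φ l g⁻¹ = ∑ x, ∑ v : V, F ⟨v, 1⟩ * twist φ x l (.ofMul v⁻¹) := by
  classical
  rw [sum_semi, Finset.sum_eq_single 1]
  · rw [Finset.sum_comm]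
    refine Finset.sum_congr rfl fun v _ => ?_
    rw [← Finset.mul_sum]
    congr 1
    simp [indCh]
  · intro h _ hh
    refine Finset.sum_eq_zero fun v _ => ?_
    simp [indCh, hh]
  · simp

lemma ind_irr {H V : Type} [CommGroup H] [Fintype H] [CommGroup V] [Fintype V]
    (φ : H →* MulAut V) (hfree : ∀ h, h ≠ 1 → ∀ v, φ h v = v → v = 1)
    (l : AddChar (Additive V) ℂ) (hl : l ≠ 0) : indCh φ l ∈ Irr (V ⋊[φ] H) := by
  classical
  have : Fintype (V ⋊[φ] H) := Fintype.ofEquiv _ (SemidirectProduct.equivProd (φ := φ)).symm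
  let ρ : Representation ℂ (V ⋊[φ] H) (H → ℂ) :=
    { toFun := fun g =>
        { toFun := fun F x => twist φ x l (.ofMul g.left) * F (x * g.right)
          map_add' := fun F F' => by funext x; simp [mul_add]
          map_smul' := fun c F => by funext x; simp; ring }
      map_one' := by
        ext F x; simp
      map_mul' := fun g h => by
        refine LinearMap.ext fun F => funext fun x => ?_
        simp only [LinearMap.coe_mk, AddHom.coe_mk, Module.End.mul_apply,
          SemidirectProduct.mul_left, SemidirectProduct.mul_right, ofMul_mul,
          AddChar.map_add_eq_mul, twist_apply, map_mul, MulAut.mul_apply, mul_assoc] }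
  have hch : (FDRep.of ρ).character = indCh φ l := by
    funext g
    change LinearMap.trace ℂ (H → ℂ) (ρ g) = _
    rw [LinearMap.trace_eq_matrix_trace ℂ (Pi.basisFun ℂ H), Matrix.trace]
    have : ∀ x, (LinearMap.toMatrix (Pi.basisFun ℂ H) (Pi.basisFun ℂ H) (ρ g)).diag x
        = if g.right = 1 then twist φ x l (.ofMul g.left) else 0 := by
      intro x
      rw [Matrix.diag_apply, LinearMap.toMatrix_apply]
      simp [ρ, Pi.single_apply]
    simp only [this, indCh]
    split_ifs <;> simp
  refine ⟨FDRep.of ρ, ?_, hch.symm⟩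
  rw [FDRep.simple_iff_char_is_norm_one, hch, ind_inner]
  have h2 : ∀ x, ∑ v : V, indCh φ l ⟨v, 1⟩ * twist φ x l (.ofMul v⁻¹)
      = (Fintype.card V : ℂ) := by
    intro x
    simp only [indCh, if_true, Finset.sum_mul]
    rw [Finset.sum_comm]
    simp only [dual_orth]
    rw [Finset.sum_eq_single x]
    · simp
    · intro y _ hy
      exact if_neg fun h => hy (twist_inj φ hfree l hl _ _ h)
    · simp
  simp only [h2]
  rw [SemidirectProduct.card]
  simp [mul_comm]

lemma irr_semi {H V : Type} [CommGroup H] [Fintype H] [CommGroup V] [Fintype V]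
    (φ : H →* MulAut V) (hfree : ∀ h, h ≠ 1 → ∀ v, φ h v = v → v = 1)
    (f : V ⋊[φ] H → ℂ) : f ∈ Irr (V ⋊[φ] H) ↔
      (∃ ψ : AddChar (Additive H) ℂ, f = fun g => ψ (.ofMul g.right)) ∨
      ∃ l : AddChar (Additive V) ℂ, l ≠ 0 ∧ f = indCh φ l := by
  classical
  have : Fintype (V ⋊[φ] H) := Fintype.ofEquiv _ (SemidirectProduct.equivProd (φ := φ)).symm
  have hlin : ∀ ψ : AddChar (Additive H) ℂ,
      (fun g : V ⋊[φ] H => ψ (.ofMul g.right)) ∈ Irr (V ⋊[φ] H) := fun ψ =>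
    lin_irr ((chHom ψ).comp SemidirectProduct.rightHom)
  have hq : (Fintype.card V : ℂ) ≠ 0 := by exact_mod_cast Fintype.card_ne_zero
  have hn : (Fintype.card H : ℂ) ≠ 0 := by exact_mod_cast Fintype.card_ne_zero
  constructor
  · intro hf
    by_contra hne
    push Not at hne
    obtain ⟨h1, h2⟩ := hne
    have hV : ∀ v, f ⟨v, 1⟩ = f ⟨1, 1⟩ := by
      have key := fourier_const (fun v => f ⟨v, 1⟩) (fun l hl => by
        have h3 := irr_orth hf (ind_irr φ hfree l hl) (h2 l hl)
        rw [ind_inner] at h3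
        have h4 : ∀ x, ∑ v : V, f ⟨v, 1⟩ * twist φ x l (.ofMul v⁻¹)
            = ∑ v : V, f ⟨v, 1⟩ * l (.ofMul v⁻¹) := by
          intro x
          rw [← Equiv.sum_comp (φ x).toEquiv (fun v => f ⟨v, 1⟩ * l (.ofMul v⁻¹))]
          refine Finset.sum_congr rfl fun v _ => ?_
          have h5 := irr_conj hf ⟨v, 1⟩ (SemidirectProduct.inr x)
          rw [show (SemidirectProduct.inr x * ⟨v, 1⟩ * (SemidirectProduct.inr x)⁻¹ : V ⋊[φ] H)
            = ⟨φ x v, 1⟩ by ext <;> simp] at h5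
          change _ = f ⟨φ x v, 1⟩ * l (.ofMul (φ x v)⁻¹)
          rw [h5, twist_apply, map_inv]
        simp only [h4] at h3
        simpa [hn] using h3)
      intro v
      exact mul_left_cancel₀ hq ((key v).trans (key 1).symm)
    have hfr : ∀ v h, f ⟨v, h⟩ = f ⟨1, h⟩ := by
      intro v h
      by_cases hh : h = 1
      · subst hh; exact hV v
      · obtain ⟨w, hw⟩ := free_surj φ hfree h hh v
        have h5 := irr_conj hf ⟨v, h⟩ (SemidirectProduct.inl w)
        rw [← h5]
        congr 1
        ext
        · simp [← hw]
        · simp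
    refine irr_ne_zero hf ?_
    have h6 := fourier_eqzero (fun h => f ⟨1, h⟩) (fun ψ => by
      have h3 := irr_orth hf (hlin ψ) (h1 ψ)
      rw [sum_semi] at h3
      simp only [hfr] at h3
      simp only [SemidirectProduct.inv_right, Finset.sum_const, ← Finset.smul_sum] at h3
      simpa [hq] using h3)
    rintro ⟨v, h⟩
    rw [hfr]; exact h6 h
  · rintro (⟨ψ, rfl⟩ | ⟨l, hl, rfl⟩)
    · exact hlin ψ
    · exact ind_irr φ hfree l hl

lemma ind_one {H V : Type} [CommGroup H] [Fintype H] [CommGroup V]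
    (φ : H →* MulAut V) (l : AddChar (Additive V) ℂ) :
    indCh φ l 1 = (Nat.card H : ℂ) := by
  simp [indCh]

lemma ind_eq {H V : Type} [CommGroup H] [Fintype H] [CommGroup V] [Fintype V]
    (φ : H →* MulAut V) (l m : AddChar (Additive V) ℂ) (h : indCh φ l = indCh φ m) :
    ∃ x, twist φ x l = m := by
  classical
  by_contra hne
  push Not at hne
  have h1 : ∀ v : V, ∑ x, twist φ x l (.ofMul v) = ∑ x, twist φ x m (.ofMul v) := by
    intro v
    have := congrFun h ⟨v, 1⟩
    simpa [indCh] using this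
  have h2 : ∑ v : V, (∑ x, twist φ x l (.ofMul v)) * m (.ofMul v⁻¹)
      = ∑ v : V, (∑ x, twist φ x m (.ofMul v)) * m (.ofMul v⁻¹) := by
    simp only [h1]
  simp only [Finset.sum_mul] at h2
  rw [Finset.sum_comm, Finset.sum_comm (s := (Finset.univ : Finset V))] at h2
  simp only [dual_orth, hne, if_false, Finset.sum_const_zero] at h2
  rw [← Finset.sum_filter, Finset.sum_const, nsmul_eq_mul] at h2
  have h3 := mul_eq_zero.1 h2.symm
  rcases h3 with h3 | h3
  · have h4 : (Finset.univ.filter fun x => twist φ x m = m) = ∅ := by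
      rw [← Finset.card_eq_zero]; exact_mod_cast h3
    have : (1 : H) ∈ (Finset.univ.filter fun x => twist φ x m = m) := by
      simp [twist_one]
    rw [h4] at this
    simp at this
  · exact Fintype.card_ne_zero (α := V) (by exact_mod_cast h3)

lemma ind_twist {H V : Type} [CommGroup H] [Fintype H] [CommGroup V]
    (φ : H →* MulAut V) (l : AddChar (Additive V) ℂ) (y : H) :
    indCh φ (twist φ y l) = indCh φ l := by
  funext g
  simp only [indCh, twist_twist]
  congr 1
  exact Equiv.sum_comp (Equiv.mulLeft y) (fun x => twist φ x l (.ofMul g.left))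

lemma acd_formula {H V : Type} [CommGroup H] [Fintype H] [Nontrivial H]
    [CommGroup V] [Fintype V] (p : ℕ) (hp : p.Prime) (helem : ∀ v : V, v ^ p = 1)
    (φ : H →* MulAut V) (hfree : ∀ h, h ≠ 1 → ∀ v, φ h v = v → v = 1)
    (k : Subfield ℂ) (hk : ∀ ζ : ℂ, IsPrimitiveRoot ζ p → ζ ∈ k) :
    ∃ t : ℕ, t * Nat.card H + 1 = Nat.card V ∧
      acd {f ∈ Irr (V ⋊[φ] H) | ∀ g, f g ∈ k} =
        ((Nat.card (kDual H k) : ℝ) + t * Nat.card H) / ((Nat.card (kDual H k) : ℝ) + t) := by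
  classical
  let lin : AddChar (Additive H) ℂ → (V ⋊[φ] H → ℂ) := fun ψ g => ψ (.ofMul g.right)
  have hlin : Function.Injective lin := by
    intro a b hab
    ext h
    exact congrFun hab ⟨1, h.toMul⟩
  let A : Finset (V ⋊[φ] H → ℂ) := (Finset.univ.filter fun ψ => ψ ∈ kDual H k).image lin
  let D : Finset (AddChar (Additive V) ℂ) := Finset.univ.erase 0
  let B : Finset (V ⋊[φ] H → ℂ) := D.image (indCh φ)
  have hkV : ∀ (l : AddChar (Additive V) ℂ) v, l v ∈ k := by
    intro l v
    have h1 : (l v) ^ p = 1 := by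
      rw [← AddChar.map_nsmul_eq_pow]
      have : p • v = 0 := helem v.toMul
      rw [this, AddChar.map_zero_eq_one]
    by_cases h2 : l v = 1
    · rw [h2]; exact k.one_mem
    · have := Fact.mk hp
      exact hk _ (IsPrimitiveRoot.iff_orderOf.2 (orderOf_eq_prime h1 h2))
  have hS : {f ∈ Irr (V ⋊[φ] H) | ∀ g, f g ∈ k} = ((A ∪ B : Finset _) : Set _) := by
    ext f
    simp only [Set.mem_ofPred_eq, irr_semi φ hfree, Finset.coe_union, Set.mem_union,
      Finset.mem_coe, A, B, D, Finset.mem_image, Finset.mem_filter, Finset.mem_univ, true_and,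
      Finset.mem_erase, and_true]
    constructor
    · rintro ⟨⟨ψ, rfl⟩ | ⟨l, hl, rfl⟩, h⟩
      · exact Or.inl ⟨ψ, fun x => h ⟨1, x.toMul⟩, rfl⟩
      · exact Or.inr ⟨l, hl, rfl⟩
    · rintro (⟨ψ, hψ, rfl⟩ | ⟨l, hl, rfl⟩)
      · exact ⟨Or.inl ⟨ψ, rfl⟩, fun g => hψ _⟩
      · refine ⟨Or.inr ⟨l, hl, rfl⟩, fun g => ?_⟩
        unfold indCh
        split_ifs
        · exact k.sum_mem fun x _ => hkV _ _
        · exact k.zero_mem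
  have hA1 : ∀ f ∈ A, f 1 = 1 := by
    intro f hf
    simp only [A, Finset.mem_image] at hf
    obtain ⟨ψ, -, rfl⟩ := hf
    simp [lin]
  have hB1 : ∀ f ∈ B, f 1 = (Nat.card H : ℂ) := by
    intro f hf
    simp only [B, Finset.mem_image] at hf
    obtain ⟨l, -, rfl⟩ := hf
    exact ind_one φ l
  have hdisj : Disjoint A B := by
    rw [Finset.disjoint_left]
    intro f ha hb
    have h1 := hA1 f ha
    rw [hB1 f hb] at h1
    have h2 : Nat.card H = 1 := by exact_mod_cast h1
    have h3 := Finite.one_lt_card (α := H)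
    omega
  have hAc : A.card = Nat.card (kDual H k) := by
    rw [Finset.card_image_of_injective _ hlin, Nat.card_eq_fintype_card, Fintype.card_subtype]
  have hBc : B.card * Nat.card H + 1 = Nat.card V := by
    have h1 : D.card = ∑ b ∈ B, (D.filter fun a => indCh φ a = b).card :=
      Finset.card_eq_sum_card_fiberwise (fun a ha => Finset.mem_image_of_mem _ ha)
    have h2 : ∀ b ∈ B, (D.filter fun a => indCh φ a = b).card = Nat.card H := by
      intro b hb
      simp only [B, Finset.mem_image] at hb
      obtain ⟨l, hl, rfl⟩ := hb
      have hl0 : l ≠ 0 := by simpa [D] using hl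
      have h3 : (D.filter fun a => indCh φ a = indCh φ l) =
          Finset.univ.image fun x => twist φ x l := by
        ext m
        simp only [D, Finset.mem_filter, Finset.mem_erase, Finset.mem_univ, and_true,
          Finset.mem_image, true_and]
        constructor
        · rintro ⟨-, h⟩
          exact ind_eq φ l m h.symm
        · rintro ⟨x, rfl⟩
          exact ⟨twist_ne_zero φ l hl0 x, ind_twist φ l x⟩
      rw [h3, Finset.card_image_of_injective _ (fun x y => twist_inj φ hfree l hl0 x y),
        Finset.card_univ, Nat.card_eq_fintype_card]
    rw [Finset.sum_congr rfl h2, Finset.sum_const, smul_eq_mul] at h1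
    rw [← h1, ← card_dual V, Nat.card_eq_fintype_card, ← Finset.card_univ]
    exact Finset.card_erase_add_one (Finset.mem_univ _)
  refine ⟨B.card, hBc, ?_⟩
  unfold acd
  rw [hS, Set.ncard_coe_finset, finsum_mem_coe_finset, Finset.card_union_of_disjoint hdisj,
    Finset.sum_union hdisj, hAc, Finset.sum_congr rfl (fun f hf => congrArg Complex.re (hA1 f hf)),
    Finset.sum_congr rfl (fun f hf => congrArg Complex.re (hB1 f hf))]
  simp [hAc]

theorem abelian_semidirect_acd_cases
    (p a : ℕ) (hp : p.Prime) (ha : 0 < a)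
    (H V : Type) [CommGroup H] [Fintype H] [Nontrivial H]
    [CommGroup V] [Fintype V] [Nontrivial V]
    (helem : ∀ v : V, v ^ p = 1) (hcard : Nat.card V = p ^ a)
    (φ : H →* MulAut V) (hfaith : Function.Injective φ)
    (hirr : ∀ W : Subgroup V, (∀ h : H, ∀ w ∈ W, φ h w ∈ W) → W = ⊥ ∨ W = ⊤)
    (k : Subfield ℂ) (hk : ∀ ζ : ℂ, IsPrimitiveRoot ζ p → ζ ∈ k) :
    (Nat.card H = 2 →
        acd {f ∈ Irr (V ⋊[φ] H) | ∀ g, f g ∈ k} =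
          2 * ((p : ℝ) ^ a + 1) / ((p : ℝ) ^ a + 3)) ∧
    (Nat.card H = 3 ∧
        {h : H | ∀ χ : H → ℂ, χ ∈ Irr H → χ 1 = 1 → (∀ x, χ x ∈ k) → χ h = 1} = {1} ∧
        p ^ a < 10 →
        acd {f ∈ Irr (V ⋊[φ] H) | ∀ g, f g ∈ k} =
          3 * ((p : ℝ) ^ a + 2) / ((p : ℝ) ^ a + 8)) ∧
    (Nat.card H = p ^ a - 1 ∧
        {h : H | ∀ χ : H → ℂ, χ ∈ Irr H → χ 1 = 1 → (∀ x, χ x ∈ k) → χ h = 1} = {1} →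
        acd {f ∈ Irr (V ⋊[φ] H) | ∀ g, f g ∈ k} =
          2 * ((p : ℝ) ^ a - 1) / (p : ℝ) ^ a) ∧
    (¬ Nat.card H = 2 ∧
        ¬ (Nat.card H = 3 ∧
          {h : H | ∀ χ : H → ℂ, χ ∈ Irr H → χ 1 = 1 → (∀ x, χ x ∈ k) → χ h = 1} = {1} ∧
          p ^ a < 10) ∧
        ¬ (Nat.card H = p ^ a - 1 ∧
          {h : H | ∀ χ : H → ℂ, χ ∈ Irr H → χ 1 = 1 → (∀ x, χ x ∈ k) → χ h = 1} = {1}) →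
        2 ≤ acd {f ∈ Irr (V ⋊[φ] H) | ∀ g, f g ∈ k}) := by
  have hfree : ∀ h, h ≠ 1 → ∀ v, φ h v = v → v = 1 := by
    intro h hh v hv
    let W : Subgroup V :=
      { carrier := {v | φ h v = v}
        one_mem' := map_one _
        mul_mem' := by
          intro a b ha hb
          change φ h (a * b) = a * b
          rw [map_mul, ha, hb]
        inv_mem' := by
          intro a ha
          change φ h a⁻¹ = a⁻¹
          rw [map_inv, ha] }
    rcases hirr W (by
      intro x w hw
      change φ h (φ x w) = φ x w
      have hw' : φ h w = w := hw
      rw [← MulAut.mul_apply, ← map_mul, mul_comm, map_mul, MulAut.mul_apply, hw']) with hW | hW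
    · have : v ∈ W := hv
      rw [hW] at this
      simpa using this
    · exfalso
      apply hh
      apply hfaith
      rw [map_one]
      ext w
      have : w ∈ W := by rw [hW]; trivial
      exact this
  obtain ⟨t, ht, hacd⟩ := acd_formula p hp helem φ hfree k hk
  rw [hacd, kDual_card_iff]
  have hn : 1 < Nat.card H := Finite.one_lt_card
  have hV : 1 < Nat.card V := Finite.one_lt_card
  have hdvd := kDual_dvd H k
  have hm0 : 0 < Nat.card (kDual H k) := Nat.card_pos
  have hcardR : (p : ℝ) ^ a = t * Nat.card H + 1 := by
    rw [hcard] at ht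
    exact_mod_cast ht.symm
  rw [hcardR]
  rw [← hcard]
  rw [← ht] at hV ⊢
  -- a group of order two has only rational characters
  have htwo : Nat.card H = 2 → Nat.card (kDual H k) = 2 := by
    intro h
    have htop : kDual H k = ⊤ := by
      rw [eq_top_iff]
      intro ψ _ x
      have hx : (ψ x) ^ 2 = 1 := by
        rw [← AddChar.map_nsmul_eq_pow]
        have : x.toMul ^ Nat.card H = 1 := pow_card_eq_one'
        rw [h] at this
        have h' : 2 • x = 0 := this
        rw [h', AddChar.map_zero_eq_one]
      rcases mul_self_eq_one_iff.1 ((sq _).symm.trans hx) with h | h <;> rw [h]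
      · exact k.one_mem
      · exact k.neg_mem k.one_mem
    rw [htop, Subgroup.card_top, card_dual, h]
  generalize Nat.card (kDual H k) = m at *
  generalize Nat.card H = n at *
  have ht0 : 0 < t := by
    rcases Nat.eq_zero_or_pos t with h | h
    · subst h; simp at hV
    · exact h
  have htR : (0 : ℝ) < t := by exact_mod_cast ht0
  have hmR : (0 : ℝ) < m := by exact_mod_cast hm0
  refine ⟨?_, ?_, ?_, ?_⟩
  · rintro h
    rw [htwo h, h]
    rw [div_eq_div_iff (by positivity) (by positivity)]
    push_cast
    ring
  · rintro ⟨h, h', -⟩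
    rw [h', h]
    rw [div_eq_div_iff (by positivity) (by positivity)]
    push_cast
    ring
  · rintro ⟨h, h'⟩
    have ht1 : t = 1 := by
      have h3 : n * 1 = n * t := by rw [mul_one, mul_comm]; simpa using h
      exact (Nat.eq_of_mul_eq_mul_left (by omega) h3).symm
    rw [h', ht1]
    have : (0 : ℝ) < n := by exact_mod_cast (by omega : 0 < n)
    rw [div_eq_div_iff (by positivity) (by positivity)]
    push_cast
    ring
  · rintro ⟨h1, h2, h3⟩
    rw [le_div_iff₀ (by positivity)]
    have key : 2 * (m + t) ≤ m + t * n := by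
      have hn3 : 3 ≤ n := by omega
      have hle : m ≤ n := Nat.le_of_dvd (by omega) hdvd
      by_cases hmn : m = n
      · subst hmn
        by_cases hm3 : m = 3
        · subst hm3
          simp only [true_and, not_lt] at h2
          omega
        · have ht2 : 2 ≤ t := by
            by_contra hlt
            have : t = 1 := by omega
            subst this
            simp at h3
          obtain ⟨j, rfl⟩ := Nat.exists_eq_add_of_le (show 4 ≤ m by omega)
          nlinarith
      · obtain ⟨c, hc⟩ := hdvd
        have hc2 : 2 ≤ c := by
          by_contra hlt
          have : c = 0 ∨ c = 1 := by omega
          rcases this with h | h <;> subst h <;> omega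
        have h2m : 2 * m ≤ n := by rw [hc, mul_comm]; exact Nat.mul_le_mul_left _ hc2
        obtain ⟨j, rfl⟩ := Nat.exists_eq_add_of_le hn3
        have : m ≤ 1 + j := by omega
        nlinarith
    exact_mod_cast key
end
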